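/- Let A > 0 and β ∈ (0,1) with β ≠ 1/2, and let f be the 2π-periodic extension of u ↦ A|u|^β from [−π,π). Then there exist functions R₁ and R₂ defined near 0 with R₁(u) = O(1) and R₂(u) = o(|u|^{2β−1}) as u → 0, such that for all u ≠ 0 near 0, (1/2)(K_∞ (f²))(u) + f(u) · (K_∞ f)(u) = −A² β (tan(πβ) + tan(πβ/2)) |u|^{2β−1} + R₁(u) + R₂(u). -/

import Mathlib

open Real MeasureTheory Filter Set Asymptotics

/-- Principal value (at `u`) of the integral of `g` over `(-π, π)`. -/
noncomputable def pvInt (g : ℝ → ℝ) (u : ℝ) : ℝ :=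
  limUnder (nhdsWithin (0:ℝ) (Set.Ioi 0))
    (fun ε : ℝ => ∫ x in {x : ℝ | x ∈ Set.Ioo (-π) π ∧ ε < |x - u|}, g x)

/-- Periodic Hilbert transform of a `2π`-periodic function:
`ℋ(f)(u) = (1/π) Σ_{n ∈ ℤ} p.v.∫_{-π}^{π} f(x)/(x - u + 2πn) dx`. -/
noncomputable def periodicHilbert (f : ℝ → ℝ) (u : ℝ) : ℝ :=
  (1/π) * ∑' n : ℤ, pvInt (fun x => f x / (x - u + 2*π*(n : ℝ))) u

/-- The operator `K_∞ = -ℋ ∂ᵤ` acting via the a.e. derivative. -/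
noncomputable def Kinf (f : ℝ → ℝ) (u : ℝ) : ℝ := - periodicHilbert (deriv f) u

/-- The `2π`-periodic extension of `g : [-π, π) → ℝ`. -/
noncomputable def perExt (g : ℝ → ℝ) (x : ℝ) : ℝ :=
  g (x - 2*π*(⌊(x + π)/(2*π)⌋ : ℝ))

lemma tan_series (γ : ℝ) (h0 : 0 < γ) (h1 : γ < 1) :
    HasSum (fun k : ℕ => 2 / (2 * (k:ℝ) + 1 - γ) - 2 / (2 * (k:ℝ) + 1 + γ))
      (π * Real.tan (π * γ / 2)) := by
  have hx : (((1 - γ) / 2 : ℝ) : ℂ) ∈ Complex.integerComplement := by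
    rw [Complex.mem_integerComplement_iff]
    rintro ⟨n, hn⟩
    have h : (n : ℝ) = (1 - γ) / 2 := by exact_mod_cast hn
    have h2 : (0:ℝ) < n := by rw [h]; linarith
    have h3 : (n:ℝ) < 1 := by rw [h]; linarith
    have h4 : 0 < n := by exact_mod_cast h2
    have h5 : n < 1 := by exact_mod_cast h3
    omega
  have key := tendsto_logDeriv_euler_cot_sub hx
  have hR : Tendsto (fun n : ℕ => ∑ j ∈ Finset.range n,
      (1 / ((1 - γ) / 2 - ((j:ℝ) + 1)) + 1 / ((1 - γ) / 2 + ((j:ℝ) + 1)))) atTop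
      (nhds (π * Real.tan (π * γ / 2) - 1 / ((1 - γ) / 2))) := by
    have hre := (Complex.continuous_re.tendsto _).comp key
    have e1 : Real.tan (π * γ / 2) = Real.cot (π * ((1 - γ) / 2)) := by
      rw [show π * ((1 - γ) / 2) = π / 2 - π * γ / 2 by ring, Real.cot_eq_cos_div_sin,
        Real.tan_eq_sin_div_cos, Real.cos_pi_div_two_sub, Real.sin_pi_div_two_sub]
    rw [e1]
    convert hre using 2
    · simp only [Function.comp, cotTerm]
      rw [← Complex.ofReal_re (∑ j ∈ _, _)]
      push_cast
      rfl
    · rw [← Complex.ofReal_re (_ - _)]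
      push_cast
      rfl
  rw [hasSum_iff_tendsto_nat_of_nonneg]
  · have hS : ∀ n : ℕ, ∑ k ∈ Finset.range n, (2 / (2 * (k:ℝ) + 1 - γ) - 2 / (2 * (k:ℝ) + 1 + γ))
        = 1 / ((1 - γ) / 2) + (∑ j ∈ Finset.range n,
      (1 / ((1 - γ) / 2 - ((j:ℝ) + 1)) + 1 / ((1 - γ) / 2 + ((j:ℝ) + 1)))) - 2 / (2 * (n:ℝ) + 1 - γ) := by
      intro n
      induction n with
      | zero =>
        have : 1 - γ ≠ 0 := by linarith
        simp
      | succ n ih =>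
        rw [Finset.sum_range_succ, ih, Finset.sum_range_succ]
        have hn : (0:ℝ) ≤ n := n.cast_nonneg
        have e1 : 1 / ((1 - γ) / 2 - ((n:ℝ) + 1)) = - (2 / (2 * (n:ℝ) + 1 + γ)) := by
          have : (2 * (n:ℝ) + 1 + γ) ≠ 0 := by positivity
          have h' : (1 - γ) / 2 - ((n:ℝ) + 1) ≠ 0 := by
            intro h; apply this; linarith
          field_simp
          rw [div_eq_iff (by intro h; apply this; linarith)]
          ring
        have e2 : 1 / ((1 - γ) / 2 + ((n:ℝ) + 1)) = (2 / (2 * ((n + 1 : ℕ):ℝ) + 1 - γ)) := by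
          have : (1 - γ) / 2 + ((n:ℝ) + 1) ≠ 0 := by
            intro h; linarith
          have h' : (2 * ((n + 1 : ℕ):ℝ) + 1 - γ) ≠ 0 := by
            push_cast; intro h; linarith
          rw [div_eq_div_iff this h']
          push_cast; ring
        rw [e1, e2]; ring
    simp_rw [hS]
    have hl : Tendsto (fun n : ℕ => 2 / (2 * (n:ℝ) + 1 - γ)) atTop (nhds 0) := by
      apply Tendsto.div_atTop tendsto_const_nhds
      have : Tendsto (fun n : ℕ => 2 * (n:ℝ)) atTop atTop :=
        tendsto_natCast_atTop_atTop.const_mul_atTop (by norm_num)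
      exact (tendsto_atTop_add_const_right _ (1 - γ) this).congr (fun n => by ring)
    convert (hR.const_add (1 / ((1 - γ) / 2))).sub hl using 2
    ring
  · intro k
    have hn : (0:ℝ) ≤ k := k.cast_nonneg
    rw [sub_nonneg]
    apply div_le_div_of_nonneg_left <;> linarith

/-- the folded kernel -/
noncomputable def wk (γ s : ℝ) : ℝ := (s ^ (-γ) - s ^ γ) / (1 - s ^ 2)

lemma wk_bound (γ s : ℝ) (h0 : 0 < γ) (h2 : γ < 2) (hs0 : 0 < s) (hs1 : s < 1) :
    0 ≤ wk γ s ∧ wk γ s ≤ 2 * s ^ (-γ) := by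
  have hd : 0 < 1 - s ^ 2 := by nlinarith
  have hb : 1 - (s ^ 2) ^ γ ≤ 2 * (1 - s ^ 2) := by
    rcases le_total γ 1 with h | h
    · have := Real.rpow_le_rpow_of_exponent_ge (x := s ^ 2) (by positivity) (by linarith) h
      rw [Real.rpow_one] at this
      linarith
    · have := one_add_mul_self_le_rpow_one_add (s := s ^ 2 - 1) (by nlinarith) h
      rw [add_sub_cancel] at this
      nlinarith
  have e : s ^ γ = s ^ (-γ) * (s ^ 2) ^ γ := by
    rw [← Real.rpow_natCast s 2, ← Real.rpow_mul hs0.le, ← Real.rpow_add hs0]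
    congr 1; push_cast; ring
  have hp : 0 < s ^ (-γ) := Real.rpow_pos_of_pos hs0 _
  have hle : (s ^ 2) ^ γ ≤ 1 := Real.rpow_le_one (by positivity) (by linarith) h0.le
  unfold wk
  rw [e]
  constructor
  · apply div_nonneg _ hd.le
    nlinarith
  · rw [div_le_iff₀ hd]
    nlinarith

lemma wk_meas (γ : ℝ) : Measurable (wk γ) := by
  unfold wk
  fun_prop

lemma wk_int_full (γ : ℝ) (h0 : 0 < γ) (h1 : γ < 1) :
    IntervalIntegrable (wk γ) volume 0 1 := by
  have h := (intervalIntegral.intervalIntegrable_rpow' (a := 0) (b := 1) (r := -γ) (by linarith)).const_mul 2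
  rw [intervalIntegrable_iff_integrableOn_Ioo_of_le zero_le_one] at h ⊢
  refine Integrable.mono' h (wk_meas γ).aestronglyMeasurable ?_
  filter_upwards [ae_restrict_mem measurableSet_Ioo] with s hs
  obtain ⟨a, b⟩ := wk_bound γ s h0 (by linarith) hs.1 hs.2
  rwa [Real.norm_of_nonneg a]

lemma wk_int (γ l : ℝ) (h0 : 0 < γ) (h2 : γ < 2) (hl : 0 < l) (hl1 : l < 1) :
    IntervalIntegrable (wk γ) volume l 1 := by
  have h := (intervalIntegral.intervalIntegrable_rpow (μ := volume) (a := l) (b := 1) (r := -γ) (Or.inr (by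
    rw [uIcc_of_le hl1.le]; intro h; exact absurd h.1 (by linarith)))).const_mul 2
  rw [intervalIntegrable_iff_integrableOn_Ioo_of_le hl1.le] at h ⊢
  refine Integrable.mono' h (wk_meas γ).aestronglyMeasurable ?_
  filter_upwards [ae_restrict_mem measurableSet_Ioo] with s hs
  obtain ⟨a, b⟩ := wk_bound γ s h0 (by linarith) (hl.trans hs.1) hs.2
  rwa [Real.norm_of_nonneg a]

lemma wk_integral (γ : ℝ) (h0 : 0 < γ) (h1 : γ < 1) :
    ∫ s in (0:ℝ)..1, 2 * wk γ s = π * Real.tan (π * γ / 2) := by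
  have hi : ∀ k : ℕ, IntervalIntegrable (fun s : ℝ => 2 * (s ^ (2 * (k:ℝ) - γ) - s ^ (2 * (k:ℝ) + γ))) volume 0 1 := by
    intro k
    have hn : (0:ℝ) ≤ k := k.cast_nonneg
    exact ((intervalIntegral.intervalIntegrable_rpow' (by linarith)).sub
      (intervalIntegral.intervalIntegrable_rpow' (by linarith))).const_mul 2
  have hv : ∀ k : ℕ, ∫ s in (0:ℝ)..1, 2 * (s ^ (2 * (k:ℝ) - γ) - s ^ (2 * (k:ℝ) + γ))
      = 2 / (2 * (k:ℝ) + 1 - γ) - 2 / (2 * (k:ℝ) + 1 + γ) := by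
    intro k
    have hn : (0:ℝ) ≤ k := k.cast_nonneg
    rw [intervalIntegral.integral_const_mul, intervalIntegral.integral_sub
      (intervalIntegral.intervalIntegrable_rpow' (by linarith))
      (intervalIntegral.intervalIntegrable_rpow' (by linarith)),
      integral_rpow (Or.inl (by linarith)), integral_rpow (Or.inl (by linarith)),
      Real.zero_rpow (by linarith), Real.zero_rpow (by linarith)]
    simp only [Real.one_rpow]
    rw [show 2 * (k:ℝ) - γ + 1 = 2 * (k:ℝ) + 1 - γ by ring, show 2 * (k:ℝ) + γ + 1 = 2 * (k:ℝ) + 1 + γ by ring]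
    ring
  have hnn : ∀ k : ℕ, ∀ s ∈ Ioo (0:ℝ) 1, 0 ≤ 2 * (s ^ (2 * (k:ℝ) - γ) - s ^ (2 * (k:ℝ) + γ)) := by
    intro k s hs
    have := Real.rpow_le_rpow_of_exponent_ge hs.1 hs.2.le (show 2 * (k:ℝ) - γ ≤ 2 * (k:ℝ) + γ by linarith)
    linarith
  have hts := tan_series γ h0 h1
  have H := hasSum_integral_of_summable_integral_norm (μ := volume.restrict (Ioo (0:ℝ) 1))
    (F := fun k : ℕ => fun s : ℝ => 2 * (s ^ (2 * (k:ℝ) - γ) - s ^ (2 * (k:ℝ) + γ)))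
    (fun k => (intervalIntegrable_iff_integrableOn_Ioo_of_le zero_le_one).1 (hi k)) (by
      refine hts.summable.congr ?_
      intro k
      rw [← hv k, intervalIntegral.integral_of_le zero_le_one, integral_Ioc_eq_integral_Ioo]
      refine (setIntegral_congr_fun measurableSet_Ioo ?_)
      intro s hs
      exact (Real.norm_of_nonneg (hnn k s hs)).symm)
  have H2 : HasSum (fun k : ℕ => 2 / (2 * (k:ℝ) + 1 - γ) - 2 / (2 * (k:ℝ) + 1 + γ))
      (∫ s in (0:ℝ)..1, 2 * wk γ s) := by
    rw [intervalIntegral.integral_of_le zero_le_one, integral_Ioc_eq_integral_Ioo]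
    have E1 : (fun k : ℕ => 2 / (2 * (k:ℝ) + 1 - γ) - 2 / (2 * (k:ℝ) + 1 + γ)) =
        fun k : ℕ => ∫ s in Ioo (0:ℝ) 1, 2 * (s ^ (2 * (k:ℝ) - γ) - s ^ (2 * (k:ℝ) + γ)) := by
      funext k
      rw [← hv k, intervalIntegral.integral_of_le zero_le_one, integral_Ioc_eq_integral_Ioo]
    have E2 : ∫ s in Ioo (0:ℝ) 1, 2 * wk γ s =
        ∫ s in Ioo (0:ℝ) 1, ∑' k : ℕ, 2 * (s ^ (2 * (k:ℝ) - γ) - s ^ (2 * (k:ℝ) + γ)) := by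
      refine (setIntegral_congr_fun measurableSet_Ioo ?_)
      intro s hs
      have hs2 : s ^ 2 < 1 := by nlinarith [hs.1, hs.2]
      have g := (hasSum_geometric_of_lt_one (sq_nonneg s) hs2).mul_left (2 * (s ^ (-γ) - s ^ γ))
      have : (fun k : ℕ => 2 * (s ^ (2 * (k:ℝ) - γ) - s ^ (2 * (k:ℝ) + γ))) =
          fun k : ℕ => (2 * (s ^ (-γ) - s ^ γ)) * (s ^ 2) ^ k := by
        funext k
        rw [← pow_mul, ← Real.rpow_natCast s (2 * k), mul_assoc, sub_mul, ← Real.rpow_add hs.1, ← Real.rpow_add hs.1]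
        push_cast
        ring_nf
      simp only []
      rw [this, g.tsum_eq, wk]
      ring
    rw [E1, E2]
    exact H
  exact H2.unique hts

/-- explicit a.e. derivative of `|x|^γ / γ` -/
noncomputable def dk (γ x : ℝ) : ℝ := |x| ^ (γ - 2) * x

lemma dk_neg (γ x : ℝ) : dk γ (-x) = - dk γ x := by
  simp [dk]

lemma dk_pos (γ x : ℝ) (hx : 0 < x) : dk γ x = x ^ (γ - 1) := by
  rw [dk, abs_of_pos hx, ← Real.rpow_add_one hx.ne']
  congr 1; ring

lemma dk_meas (γ : ℝ) : Measurable (dk γ) := by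
  unfold dk
  fun_prop

lemma dk_int (γ : ℝ) (h0 : 0 < γ) : IntervalIntegrable (dk γ) volume (-π) π := by
  have hp : IntervalIntegrable (dk γ) volume 0 π := by
    refine (intervalIntegral.intervalIntegrable_rpow' (r := γ - 1) (by linarith)).congr ?_
    intro x hx
    rw [uIoc_of_le pi_pos.le] at hx
    exact (dk_pos γ x hx.1).symm
  have hn : IntervalIntegrable (dk γ) volume (-π) 0 := by
    have h := ((IntervalIntegrable.iff_comp_neg (by simp)).1 hp).neg.symm
    simp only [neg_zero] at h
    refine h.congr ?_
    intro x _
    simp [dk_neg]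
  exact hn.trans hp

lemma dk_div_int (γ : ℝ) (h0 : 0 < γ) (u m a b : ℝ) (hab : a ≤ b) (ha : -π ≤ a) (hb : b ≤ π)
    (hm : 0 < m) (hd : ∀ x ∈ Ioo a b, m ≤ |x - u|) :
    IntervalIntegrable (fun x => dk γ x / (x - u)) volume a b := by
  have h1 : IntervalIntegrable (dk γ) volume a b := by
    refine (dk_int γ h0).mono_set ?_
    rw [uIcc_of_le hab, uIcc_of_le (by linarith)]
    exact Icc_subset_Icc ha hb
  have h2 := (h1.norm).const_mul m⁻¹
  rw [intervalIntegrable_iff_integrableOn_Ioo_of_le hab] at h2 ⊢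
  refine Integrable.mono' h2 ?_ ?_
  · exact ((dk_meas γ).div (measurable_id.sub_const u)).aestronglyMeasurable
  · filter_upwards [ae_restrict_mem measurableSet_Ioo] with x hx
    have := hd x hx
    rw [norm_div, div_eq_inv_mul, Real.norm_eq_abs (x - u)]
    gcongr

/-- the other kernel -/
noncomputable def kk (γ s : ℝ) : ℝ := 2 * s ^ γ / (1 - s ^ 2)

lemma kk_cont (γ a b : ℝ) (h0 : 0 < γ) (ha : 0 ≤ a) (hab : a ≤ b) (hb : b < 1) :
    ContinuousOn (kk γ) (uIcc a b) := by
  rw [uIcc_of_le hab]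
  unfold kk
  apply ContinuousOn.div
  · exact (continuous_const.mul (Real.continuous_rpow_const h0.le)).continuousOn
  · fun_prop
  · intro x hx
    have : x ^ 2 < 1 := by nlinarith [hx.1, hx.2]
    linarith

lemma sub_lower (γ u a : ℝ) (hu : 0 < u) (ha : 0 ≤ a) :
    ∫ x in (0:ℝ)..(u * a), 2 * x ^ γ / (x ^ 2 - u ^ 2) = - (u ^ (γ - 1) * ∫ s in (0:ℝ)..a, kk γ s) := by
  have h := intervalIntegral.integral_comp_mul_left (a := 0) (b := a)
    (fun x : ℝ => 2 * x ^ γ / (x ^ 2 - u ^ 2)) hu.ne'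
  rw [mul_zero, smul_eq_mul] at h
  have h2 : ∫ s in (0:ℝ)..a, 2 * (u * s) ^ γ / ((u * s) ^ 2 - u ^ 2) =
      ∫ s in (0:ℝ)..a, (- u ^ (γ - 2)) * kk γ s := by
    apply intervalIntegral.integral_congr
    intro s hs
    rw [uIcc_of_le ha] at hs
    simp only [kk]
    rw [Real.mul_rpow hu.le hs.1, Real.rpow_sub hu, show (u * s) ^ 2 - u ^ 2 = - (u ^ 2 * (1 - s ^ 2)) by ring,
      show u ^ (2:ℝ) = u ^ 2 by exact_mod_cast Real.rpow_natCast u 2, div_neg, mul_div_assoc, mul_div_mul_comm]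
    ring
  rw [h2, intervalIntegral.integral_const_mul] at h
  have e : u ^ (γ - 1) = u * u ^ (γ - 2) := by
    rw [mul_comm, ← Real.rpow_add_one hu.ne']; congr 1; ring
  rw [e]
  field_simp at h
  linarith

lemma sub_upper (γ u l b : ℝ) (hu : 0 < u) (hl : 0 < l) (hlb : l ≤ b) (hb : b < 1) :
    ∫ x in (u / b)..(u / l), 2 * x ^ γ / (x ^ 2 - u ^ 2) =
      u ^ (γ - 1) * ∫ s in l..b, 2 * s ^ (-γ) / (1 - s ^ 2) := by
  have h := intervalIntegral.integral_comp_mul_deriv'' (a := l) (b := b) (f := fun s => u / s)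
    (f' := fun s => - u / s ^ 2) (g := fun x : ℝ => 2 * x ^ γ / (x ^ 2 - u ^ 2)) ?_ ?_ ?_ ?_
  · rw [intervalIntegral.integral_symm, ← h, ← intervalIntegral.integral_neg, ← intervalIntegral.integral_const_mul]
    apply intervalIntegral.integral_congr
    intro s hs
    rw [uIcc_of_le hlb] at hs
    have hs0 : 0 < s := by linarith [hs.1]
    have hd : 0 < 1 - s ^ 2 := by nlinarith [hs.2]
    simp only [Function.comp]
    rw [Real.div_rpow hu.le hs0.le, Real.rpow_neg hs0.le, Real.rpow_sub_one hu.ne']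
    have hd' : (u / s) ^ 2 - u ^ 2 = u ^ 2 * (1 - s ^ 2) / s ^ 2 := by
      field_simp
    rw [hd']
    have := (Real.rpow_pos_of_pos hs0 γ).ne'
    field_simp
  · rw [uIcc_of_le hlb]
    apply ContinuousOn.div (by fun_prop) (by fun_prop)
    intro x hx; linarith [hx.1]
  · intro x hx
    rw [min_eq_left hlb] at hx
    have hx0 : x ≠ 0 := by linarith [hx.1]
    have h' : HasDerivAt (fun s => u / s) (-u / x ^ 2) x := by
      simpa [div_eq_mul_inv] using (hasDerivAt_inv hx0).const_mul u
    exact h'.hasDerivWithinAt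
  · rw [uIcc_of_le hlb]
    apply ContinuousOn.div (by fun_prop) (by fun_prop)
    intro x hx; have : 0 < x := by linarith [hx.1]
    positivity
  · rw [uIcc_of_le hlb]
    have : ∀ x ∈ (fun s => u / s) '' Icc l b, u < x := by
      rintro _ ⟨s, hs, rfl⟩
      have hs0 : 0 < s := by linarith [hs.1]
      simp only
      rw [lt_div_iff₀ hs0]
      nlinarith [hs.2]
    apply ContinuousOn.div
    · intro x hx
      have := this x hx
      exact (continuousAt_const.mul (Real.continuousAt_rpow_const x γ (Or.inl (by linarith)))).continuousWithinAt
    · fun_prop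
    · intro x hx
      have := this x hx
      nlinarith

lemma trunc (γ u ε : ℝ) (h0 : 0 < γ) (h2 : γ < 2) (hε : 0 < ε) (hu : ε < u) (huπ : u + ε < π) :
    ∫ x in {x : ℝ | x ∈ Set.Ioo (-π) π ∧ ε < |x - u|}, dk γ x / (x - u) =
      u ^ (γ - 1) * ((∫ s in (u / π)..(u / (u + ε)), 2 * wk γ s) +
        (∫ s in (1 - ε / u)..(u / (u + ε)), kk γ s) - ∫ s in (0:ℝ)..(u / π), kk γ s)
      + ∫ x in (u - ε)..(u + ε), x ^ (γ - 1) / (x + u) := by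
  have hu0 : 0 < u := hε.trans hu
  have hS : {x : ℝ | x ∈ Set.Ioo (-π) π ∧ ε < |x - u|} = Ioo (-π) (u - ε) ∪ Ioo (u + ε) π := by
    ext x
    simp only [Set.mem_ofPred_eq, mem_Ioo, mem_union, lt_abs]
    constructor
    · rintro ⟨⟨h1, h2⟩, h | h⟩
      · right; constructor <;> linarith
      · left; constructor <;> linarith
    · rintro (⟨h1, h2⟩ | ⟨h1, h2⟩)
      · refine ⟨⟨h1, by linarith⟩, Or.inr (by linarith)⟩
      · refine ⟨⟨by linarith, h2⟩, Or.inl (by linarith)⟩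
  have hd : Disjoint (Ioo (-π) (u - ε)) (Ioo (u + ε) π) := by
    rw [Set.disjoint_left]
    intro x hx hx'
    linarith [hx.2, hx'.1]
  have hπ := pi_pos
  have i1 : IntervalIntegrable (fun x => dk γ x / (x - u)) volume (-π) 0 :=
    dk_div_int γ h0 u ε _ _ (by linarith) le_rfl (by linarith) hε (fun x hx => by
      rw [le_abs]; right; linarith [hx.2])
  have i2 : IntervalIntegrable (fun x => dk γ x / (x - u)) volume 0 (u - ε) :=
    dk_div_int γ h0 u ε _ _ (by linarith) (by linarith) (by linarith) hε (fun x hx => by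
      rw [le_abs]; right; linarith [hx.2])
  have i3 : IntervalIntegrable (fun x => dk γ x / (x - u)) volume (u + ε) π :=
    dk_div_int γ h0 u ε _ _ (by linarith) (by linarith) (by linarith) hε (fun x hx => by
      rw [le_abs]; left; linarith [hx.1])
  rw [hS, setIntegral_union hd measurableSet_Ioo
    ((intervalIntegrable_iff_integrableOn_Ioo_of_le (by linarith)).1 (i1.trans i2))
    ((intervalIntegrable_iff_integrableOn_Ioo_of_le (by linarith)).1 i3),
    ← integral_Ioc_eq_integral_Ioo, ← integral_Ioc_eq_integral_Ioo,
    ← intervalIntegral.integral_of_le (by linarith), ← intervalIntegral.integral_of_le (by linarith),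
    ← intervalIntegral.integral_add_adjacent_intervals i1 i2]
  -- reflected part
  have r1 : ∫ x in (-π)..0, dk γ x / (x - u) = ∫ x in (0:ℝ)..π, dk γ x / (x - (-u)) := by
    have := intervalIntegral.integral_comp_neg (a := 0) (b := π) (fun x => dk γ x / (x - u))
    rw [neg_zero] at this
    rw [← this]
    apply intervalIntegral.integral_congr
    intro x _
    simp only [dk_neg]
    rw [show -x - u = -(x - -u) by ring, neg_div_neg_eq]
  have j : ∀ a b, 0 ≤ a → a ≤ b → b ≤ π →
      IntervalIntegrable (fun x => dk γ x / (x - (-u))) volume a b := fun a b ha hab hb =>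
    dk_div_int γ h0 (-u) u _ _ hab (by linarith) hb hu0 (fun x hx => by
      rw [le_abs]; left; linarith [hx.1])
  have j1 := j 0 (u - ε) le_rfl (by linarith) (by linarith)
  have j2 := j (u - ε) (u + ε) (by linarith) (by linarith) (by linarith)
  have j3 := j (u + ε) π (by linarith) (by linarith) (by linarith)
  rw [r1, ← intervalIntegral.integral_add_adjacent_intervals (j1.trans j2) j3,
    ← intervalIntegral.integral_add_adjacent_intervals j1 j2]
  have s1 : (∫ x in (0:ℝ)..(u - ε), dk γ x / (x - (-u))) + (∫ x in (0:ℝ)..(u - ε), dk γ x / (x - u)) =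
      - (u ^ (γ - 1) * ∫ s in (0:ℝ)..(1 - ε / u), kk γ s) := by
    rw [← sub_lower γ u _ hu0 (by rw [sub_nonneg, div_le_one hu0]; exact hu.le),
      ← intervalIntegral.integral_add j1 i2, show u * (1 - ε / u) = u - ε by field_simp]
    apply intervalIntegral.integral_congr_ae
    filter_upwards with x hx
    rw [uIoc_of_le (by linarith)] at hx
    have hx0 := hx.1
    rw [dk_pos γ x hx0, Real.rpow_sub_one hx0.ne']
    have e1 : x - u ≠ 0 := by linarith [hx.2]
    have e2 : x - -u ≠ 0 := by linarith [hx.2]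
    rw [show x ^ 2 - u ^ 2 = (x - u) * (x - -u) by ring]
    field_simp
    ring
  have s3 : (∫ x in (u + ε)..π, dk γ x / (x - (-u))) + (∫ x in (u + ε)..π, dk γ x / (x - u)) =
      u ^ (γ - 1) * ∫ s in (u / π)..(u / (u + ε)), 2 * s ^ (-γ) / (1 - s ^ 2) := by
    rw [← sub_upper γ u _ _ hu0 (by positivity) (by gcongr) (by rw [div_lt_one (by linarith)]; linarith),
      ← intervalIntegral.integral_add j3 i3, div_div_cancel₀ hu0.ne', div_div_cancel₀ hu0.ne']
    apply intervalIntegral.integral_congr_ae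
    filter_upwards with x hx
    rw [uIoc_of_le (by linarith)] at hx
    have hx0 : 0 < x := by linarith [hx.1]
    rw [dk_pos γ x hx0, Real.rpow_sub_one hx0.ne']
    have e1 : x - u ≠ 0 := by linarith [hx.1]
    have e2 : x - -u ≠ 0 := by linarith [hx.1]
    rw [show x ^ 2 - u ^ 2 = (x - u) * (x - -u) by ring]
    field_simp
    ring
  have s2 : ∫ x in (u - ε)..(u + ε), dk γ x / (x - (-u)) = ∫ x in (u - ε)..(u + ε), x ^ (γ - 1) / (x + u) := by
    apply intervalIntegral.integral_congr
    intro x hx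
    rw [uIcc_of_le (by linarith)] at hx
    simp only [sub_neg_eq_add]
    rw [dk_pos γ x (by linarith [hx.1])]
  have hlb : u / π ≤ u / (u + ε) := by gcongr
  have hl0 : 0 < u / π := by positivity
  have hb1 : u / (u + ε) < 1 := by rw [div_lt_one (by linarith)]; linarith
  have ha0 : 0 ≤ 1 - ε / u := by rw [sub_nonneg, div_le_one hu0]; exact hu.le
  have hab : 1 - ε / u ≤ u / (u + ε) := by
    rw [le_div_iff₀ (by linarith)]
    have : (1 - ε / u) * (u + ε) = u - ε ^ 2 / u := by field_simp; ring
    rw [this]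
    have : 0 ≤ ε ^ 2 / u := by positivity
    linarith
  have w1 : IntervalIntegrable (wk γ) volume (u / π) (u / (u + ε)) := by
    refine (wk_int γ (u / π) h0 h2 hl0 (hlb.trans_lt hb1)).mono_set ?_
    rw [uIcc_of_le hlb, uIcc_of_le (hlb.trans hb1.le)]
    exact Icc_subset_Icc le_rfl hb1.le
  have k1 : IntervalIntegrable (kk γ) volume (u / π) (u / (u + ε)) :=
    (kk_cont γ _ _ h0 hl0.le hlb hb1).intervalIntegrable
  have k0 : IntervalIntegrable (kk γ) volume 0 (u / π) :=
    (kk_cont γ _ _ h0 le_rfl hl0.le (hlb.trans_lt hb1)).intervalIntegrable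
  have ka : IntervalIntegrable (kk γ) volume 0 (1 - ε / u) :=
    (kk_cont γ _ _ h0 le_rfl ha0 (hab.trans_lt hb1)).intervalIntegrable
  have kb : IntervalIntegrable (kk γ) volume (1 - ε / u) (u / (u + ε)) :=
    (kk_cont γ _ _ h0 ha0 hab hb1).intervalIntegrable
  have t : ∫ s in (u / π)..(u / (u + ε)), 2 * s ^ (-γ) / (1 - s ^ 2) =
      (∫ s in (u / π)..(u / (u + ε)), 2 * wk γ s) + ∫ s in (u / π)..(u / (u + ε)), kk γ s := by
    rw [← intervalIntegral.integral_add (w1.const_mul 2) k1]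
    apply intervalIntegral.integral_congr
    intro s _
    simp only [wk, kk]
    ring
  have q1 := intervalIntegral.integral_add_adjacent_intervals k0 k1
  have q2 := intervalIntegral.integral_add_adjacent_intervals ka kb
  rw [t] at s3
  rw [← s2]
  have q3 : (∫ s in (u / π)..(u / (u + ε)), kk γ s) = (∫ s in (0:ℝ)..(1 - ε / u), kk γ s)
    + (∫ s in (1 - ε / u)..(u / (u + ε)), kk γ s) - ∫ s in (0:ℝ)..(u / π), kk γ s := by linarith
  rw [q3] at s3
  linear_combination s1 + s3

lemma pv_lim (γ u : ℝ) (h0 : 0 < γ) (h2 : γ < 2) (hu0 : 0 < u) (huπ : u < π) :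
    Tendsto (fun ε : ℝ => ∫ x in {x : ℝ | x ∈ Set.Ioo (-π) π ∧ ε < |x - u|}, dk γ x / (x - u))
      (nhdsWithin (0:ℝ) (Set.Ioi 0))
      (nhds (u ^ (γ - 1) * ((∫ s in (u / π)..1, 2 * wk γ s) - ∫ s in (0:ℝ)..(u / π), kk γ s))) := by
  have hsm : ∀ r : ℝ, 0 < r → ∀ᶠ ε in nhdsWithin (0:ℝ) (Set.Ioi 0), ε < r := fun r hr =>
    (eventually_lt_nhds hr).filter_mono nhdsWithin_le_nhds
  have hpos : ∀ᶠ ε in nhdsWithin (0:ℝ) (Set.Ioi 0), 0 < ε := self_mem_nhdsWithin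
  have hid : Tendsto (fun ε : ℝ => ε) (nhdsWithin (0:ℝ) (Set.Ioi 0)) (nhds 0) :=
    tendsto_id.mono_left nhdsWithin_le_nhds
  have hl0 : 0 < u / π := by positivity
  have hl1 : u / π < 1 := by rw [div_lt_one pi_pos]; exact huπ
  have T1 : Tendsto (fun ε : ℝ => ∫ s in (u / π)..(u / (u + ε)), 2 * wk γ s)
      (nhdsWithin (0:ℝ) (Set.Ioi 0)) (nhds (∫ s in (u / π)..1, 2 * wk γ s)) := by
    have hi := (wk_int γ (u / π) h0 h2 hl0 hl1).const_mul 2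
    have hc := intervalIntegral.continuousOn_primitive_interval (a := u / π) (b := 1) (μ := volume)
      (f := fun s => 2 * wk γ s) (by
        rw [uIcc_of_le hl1.le, integrableOn_Icc_iff_integrableOn_Ioo]
        exact (intervalIntegrable_iff_integrableOn_Ioo_of_le hl1.le).1 hi)
    rw [uIcc_of_le hl1.le] at hc
    have hc1 := hc 1 ⟨hl1.le, le_rfl⟩
    refine Tendsto.comp (g := fun x => ∫ s in (u / π)..x, 2 * wk γ s) hc1 ?_
    refine tendsto_nhdsWithin_iff.2 ⟨?_, ?_⟩
    · have : Tendsto (fun ε : ℝ => u / (u + ε)) (nhdsWithin (0:ℝ) (Set.Ioi 0)) (nhds (u / (u + 0))) :=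
        (tendsto_const_nhds).div (hid.const_add u) (by simpa using hu0.ne')
      rwa [add_zero, div_self hu0.ne'] at this
    · filter_upwards [hpos, hsm (π - u) (by linarith)] with ε h1 h2
      constructor
      · gcongr; linarith
      · rw [div_le_one (by linarith)]; linarith
  have T2 : Tendsto (fun ε : ℝ => ∫ s in (1 - ε / u)..(u / (u + ε)), kk γ s)
      (nhdsWithin (0:ℝ) (Set.Ioi 0)) (nhds 0) := by
    have hb : Tendsto (fun ε : ℝ => 2 * ε / u) (nhdsWithin (0:ℝ) (Set.Ioi 0)) (nhds 0) := by
      have := (hid.const_mul 2).div_const u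
      simpa using this
    refine squeeze_zero_norm' ?_ hb
    filter_upwards [hpos, hsm u hu0] with ε h1 h3
    have ha0 : 0 ≤ 1 - ε / u := by rw [sub_nonneg, div_le_one hu0]; exact h3.le
    have hba : u / (u + ε) - (1 - ε / u) = ε ^ 2 / (u * (u + ε)) := by
      field_simp; ring
    have hba0 : 0 ≤ ε ^ 2 / (u * (u + ε)) := by positivity
    have h := intervalIntegral.norm_integral_le_of_norm_le_const (a := 1 - ε / u) (b := u / (u + ε))
      (f := kk γ) (C := 2 * (u + ε) / ε) (by
        intro s hs
        rw [uIoc_of_le (by linarith)] at hs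
        have hs0 : 0 < s := by linarith [hs.1]
        have hs1 : 1 - s ≥ ε / (u + ε) := by
          have : ε / (u + ε) = 1 - u / (u + ε) := by field_simp; ring
          linarith [hs.2]
        have he : 0 < ε / (u + ε) := by positivity
        have hsl : s ≤ 1 := by linarith
        have hp : s ^ γ ≤ 1 := Real.rpow_le_one hs0.le hsl h0.le
        have hp0 : 0 ≤ s ^ γ := Real.rpow_nonneg hs0.le _
        have hd : ε / (u + ε) ≤ 1 - s ^ 2 := by nlinarith
        have hd0 : 0 < 1 - s ^ 2 := by linarith
        rw [kk, Real.norm_of_nonneg (by positivity)]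
        calc 2 * s ^ γ / (1 - s ^ 2) ≤ 2 * 1 / (ε / (u + ε)) := by gcongr
          _ = 2 * (u + ε) / ε := by field_simp)
    rw [hba, abs_of_nonneg hba0] at h
    refine h.trans (le_of_eq ?_)
    field_simp
  have T3 : Tendsto (fun ε : ℝ => ∫ x in (u - ε)..(u + ε), x ^ (γ - 1) / (x + u))
      (nhdsWithin (0:ℝ) (Set.Ioi 0)) (nhds 0) := by
    have hi : IntervalIntegrable (fun x : ℝ => x ^ (γ - 1) / (x + u)) volume 0 (2 * u) := by
      have hc : ContinuousOn (fun x : ℝ => (x + u)⁻¹) (uIcc 0 (2 * u)) := by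
        rw [uIcc_of_le (by linarith)]
        apply ContinuousOn.inv₀ (by fun_prop)
        intro x hx; linarith [hx.1]
      simpa [div_eq_mul_inv] using
        (intervalIntegral.intervalIntegrable_rpow' (r := γ - 1) (by linarith)).mul_continuousOn hc
    have hc := intervalIntegral.continuousOn_primitive_interval (a := 0) (b := 2 * u) (μ := volume)
      (f := fun x : ℝ => x ^ (γ - 1) / (x + u)) (by
        rw [uIcc_of_le (by linarith), integrableOn_Icc_iff_integrableOn_Ioo]
        exact (intervalIntegrable_iff_integrableOn_Ioo_of_le (by linarith)).1 hi)
    rw [uIcc_of_le (by linarith)] at hc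
    have hcu : ContinuousAt (fun x : ℝ => ∫ t in (0:ℝ)..x, t ^ (γ - 1) / (t + u)) u :=
      hc.continuousAt (Icc_mem_nhds hu0 (by linarith))
    have ta : Tendsto (fun ε : ℝ => u - ε) (nhdsWithin (0:ℝ) (Set.Ioi 0)) (nhds u) := by
      simpa using hid.const_sub u
    have tb : Tendsto (fun ε : ℝ => u + ε) (nhdsWithin (0:ℝ) (Set.Ioi 0)) (nhds u) := by
      simpa using hid.const_add u
    have := (hcu.tendsto.comp tb).sub (hcu.tendsto.comp ta)
    rw [sub_self] at this
    refine this.congr' ?_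
    filter_upwards [hpos, hsm u hu0] with ε h1 h3
    have ms : ∀ y, 0 ≤ y → y ≤ 2 * u →
        IntervalIntegrable (fun x : ℝ => x ^ (γ - 1) / (x + u)) volume 0 y := by
      intro y hy hy2
      refine hi.mono_set ?_
      rw [uIcc_of_le hy, uIcc_of_le (by linarith)]
      exact Icc_subset_Icc le_rfl hy2
    exact intervalIntegral.integral_interval_sub_left (ms _ (by linarith) (by linarith))
      (ms _ (by linarith) (by linarith))
  have T := ((((T1.add T2).sub_const (∫ s in (0:ℝ)..(u / π), kk γ s))).const_mul (u ^ (γ - 1))).add T3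
  rw [add_zero, add_zero] at T
  refine T.congr' ?_
  filter_upwards [hpos, hsm u hu0, hsm (π - u) (by linarith)] with ε h1 h3 h4
  exact (trunc γ u ε h0 h2 h1 h3 (by linarith)).symm

lemma val_bound (γ : ℝ) (h0 : 0 < γ) (h2 : γ < 2) (hne : γ ≠ 1) :
    ∃ M, ∀ u : ℝ, 0 < u → u < 1 →
      |u ^ (γ - 1) * ((∫ s in (u / π)..1, 2 * wk γ s) - ∫ s in (0:ℝ)..(u / π), kk γ s)
        - π * Real.tan (π * γ / 2) * u ^ (γ - 1)| ≤ M := by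
  have hπ := Real.pi_gt_three
  -- the kk part
  have kb : ∀ u : ℝ, 0 < u → u < 1 → |u ^ (γ - 1) * ∫ s in (0:ℝ)..(u / π), kk γ s| ≤ 4 := by
    intro u hu hu1
    have hl : u / π ≤ 1 / 3 := by
      rw [div_le_iff₀ pi_pos]; linarith
    have hl' : u / π ≤ u := div_le_self hu.le (by linarith)
    have hl0 : 0 < u / π := by positivity
    have h := intervalIntegral.norm_integral_le_of_norm_le_const (a := 0) (b := u / π)
      (f := kk γ) (C := 4) (by
        intro s hs
        rw [uIoc_of_le hl0.le] at hs
        have hs0 : 0 < s := hs.1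
        have hs1 : s ≤ 1 / 3 := hs.2.trans hl
        have hp : s ^ γ ≤ 1 := Real.rpow_le_one hs0.le (by linarith) h0.le
        have hp0 : 0 ≤ s ^ γ := Real.rpow_nonneg hs0.le _
        have hd : 1 / 2 ≤ 1 - s ^ 2 := by nlinarith
        have hd0 : 0 < 1 - s ^ 2 := by linarith
        rw [kk, Real.norm_of_nonneg (by positivity), div_le_iff₀ hd0]
        linarith)
    rw [sub_zero, abs_of_pos hl0, Real.norm_eq_abs] at h
    have hp0 : 0 < u ^ (γ - 1) := Real.rpow_pos_of_pos hu _
    rw [abs_mul, abs_of_pos hp0]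
    calc u ^ (γ - 1) * |∫ s in (0:ℝ)..(u / π), kk γ s| ≤ u ^ (γ - 1) * (4 * u) := by
          gcongr; linarith
      _ = 4 * u ^ γ := by rw [Real.rpow_sub_one hu.ne']; field_simp
      _ ≤ 4 := by linarith [Real.rpow_le_one hu.le hu1.le h0.le]
  have scale : ∀ u : ℝ, 0 < u → u ^ (γ - 1) * (u / π) ^ (1 - γ) = π ^ (γ - 1) := by
    intro u hu
    rw [Real.div_rpow hu.le pi_pos.le, ← mul_div_assoc, ← Real.rpow_add hu, show γ - 1 + (1 - γ) = 0 by ring,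
      Real.rpow_zero, one_div, ← Real.rpow_neg pi_pos.le]
    congr 1; ring
  rcases lt_or_gt_of_ne hne with h1 | h1
  · refine ⟨4 / (1 - γ) * π ^ (γ - 1) + 4, fun u hu hu1 => ?_⟩
    have hl0 : 0 < u / π := by positivity
    have hl1 : u / π < 1 := by rw [div_lt_one pi_pos]; linarith
    have i0 : IntervalIntegrable (fun s => 2 * wk γ s) volume 0 (u / π) := by
      refine ((wk_int_full γ h0 h1).const_mul 2).mono_set ?_
      rw [uIcc_of_le hl0.le, uIcc_of_le zero_le_one]
      exact Icc_subset_Icc le_rfl hl1.le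
    have i1 := (wk_int γ _ h0 h2 hl0 hl1).const_mul 2
    have e := intervalIntegral.integral_add_adjacent_intervals i0 i1
    rw [wk_integral γ h0 h1] at e
    have b := intervalIntegral.norm_integral_le_of_norm_le (a := 0) (b := u / π) (μ := volume)
      (f := fun s => 2 * wk γ s) (g := fun s => 4 * s ^ (-γ)) hl0.le (by
        filter_upwards with s hs
        have := wk_bound γ s h0 h2 hs.1 (hs.2.trans_lt hl1)
        rw [Real.norm_of_nonneg (by linarith)]; linarith)
        ((intervalIntegral.intervalIntegrable_rpow' (by linarith)).const_mul 4)
    rw [intervalIntegral.integral_const_mul (4:ℝ) (fun s : ℝ => s ^ (-γ)), integral_rpow (Or.inl (by linarith)),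
      Real.zero_rpow (by linarith), sub_zero, Real.norm_eq_abs, show -γ + 1 = 1 - γ by ring] at b
    have hp0 : 0 < u ^ (γ - 1) := Real.rpow_pos_of_pos hu _
    have b2 : |u ^ (γ - 1) * ∫ s in (0:ℝ)..(u / π), 2 * wk γ s| ≤ 4 / (1 - γ) * π ^ (γ - 1) := by
      rw [abs_mul, abs_of_pos hp0, ← scale u hu]
      calc _ ≤ u ^ (γ - 1) * (4 * ((u / π) ^ (1 - γ) / (1 - γ))) := by gcongr
        _ = _ := by ring
    have k := kb u hu hu1
    rw [← e]
    rw [abs_le] at b2 k ⊢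
    constructor <;> nlinarith
  · refine ⟨4 / (γ - 1) * π ^ (γ - 1) + 4 + |π * Real.tan (π * γ / 2)|, fun u hu hu1 => ?_⟩
    have hl0 : 0 < u / π := by positivity
    have hl1 : u / π < 1 := by rw [div_lt_one pi_pos]; linarith
    have hnot : (0:ℝ) ∉ uIcc (u / π) 1 := by
      rw [uIcc_of_le hl1.le]; intro h; exact absurd h.1 (by linarith)
    have b := intervalIntegral.norm_integral_le_of_norm_le (a := u / π) (b := 1) (μ := volume)
      (f := fun s => 2 * wk γ s) (g := fun s => 4 * s ^ (-γ)) hl1.le (by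
        have : ∀ᵐ s : ℝ, s ≠ 1 := by simp [ae_iff]
        filter_upwards [this] with s hs1 hs
        have := wk_bound γ s h0 h2 (hl0.trans hs.1) (lt_of_le_of_ne hs.2 hs1)
        rw [Real.norm_of_nonneg (by linarith)]; linarith)
        ((intervalIntegral.intervalIntegrable_rpow (Or.inr hnot)).const_mul 4)
    rw [intervalIntegral.integral_const_mul (4:ℝ) (fun s : ℝ => s ^ (-γ)), integral_rpow (Or.inr ⟨by intro h; linarith, hnot⟩),
      Real.norm_eq_abs, show -γ + 1 = 1 - γ by ring, Real.one_rpow] at b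
    have hp0 : 0 < u ^ (γ - 1) := Real.rpow_pos_of_pos hu _
    have hp1 : u ^ (γ - 1) ≤ 1 := Real.rpow_le_one hu.le hu1.le (by linarith)
    have b2 : |u ^ (γ - 1) * ∫ s in (u / π)..1, 2 * wk γ s| ≤ 4 / (γ - 1) * π ^ (γ - 1) := by
      rw [abs_mul, abs_of_pos hp0]
      have e : 4 * ((1 - (u / π) ^ (1 - γ)) / (1 - γ)) = 4 / (γ - 1) * ((u / π) ^ (1 - γ) - 1) := by
        have a1 : γ - 1 ≠ 0 := by linarith
        have a2 : 1 - γ ≠ 0 := by intro h; linarith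
        rw [show 1 - γ = - (γ - 1) by ring, div_neg]
        field_simp
        ring
      rw [e] at b
      have hc : 0 < 4 / (γ - 1) := div_pos (by norm_num) (by linarith)
      calc _ ≤ u ^ (γ - 1) * (4 / (γ - 1) * (u / π) ^ (1 - γ)) := by
            gcongr; exact b.trans (by nlinarith)
        _ = 4 / (γ - 1) * (u ^ (γ - 1) * (u / π) ^ (1 - γ)) := by ring
        _ = _ := by rw [scale u hu]
    have b3 : |π * Real.tan (π * γ / 2) * u ^ (γ - 1)| ≤ |π * Real.tan (π * γ / 2)| := by
      rw [abs_mul _ (u ^ (γ - 1)), abs_of_pos hp0]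
      exact mul_le_of_le_one_right (abs_nonneg _) hp1
    have k := kb u hu hu1
    rw [mul_sub]
    rw [abs_le] at b2 k b3 ⊢
    constructor <;> linarith [b2.1, b2.2, k.1, k.2, b3.1, b3.2]

lemma perExt_eq (g : ℝ → ℝ) (x : ℝ) (hx : x ∈ Ioo (-π) π) : perExt g x = g x := by
  have : ⌊(x + π) / (2 * π)⌋ = 0 := by
    rw [Int.floor_eq_zero_iff]
    constructor
    · apply div_nonneg <;> linarith [hx.1, pi_pos]
    · rw [div_lt_one (by linarith [pi_pos])]; linarith [hx.2]
  simp [perExt, this]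

lemma deriv_perExt (C γ x : ℝ) (hx : x ∈ Ioo (-π) π) (hx0 : x ≠ 0) :
    deriv (perExt (fun y => C * |y| ^ γ)) x = C * γ * dk γ x := by
  have he : perExt (fun y => C * |y| ^ γ) =ᶠ[nhds x] fun y => C * |y| ^ γ := by
    filter_upwards [isOpen_Ioo.mem_nhds hx] with y hy
    exact perExt_eq _ y hy
  rw [he.deriv_eq]
  have h1 := ((hasDerivAt_abs hx0).rpow_const (p := γ) (Or.inl (abs_ne_zero.2 hx0))).const_mul C
  rw [h1.deriv, dk]
  have e : |x| ^ (γ - 1) = |x| ^ (γ - 2) * |x| := by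
    rw [← Real.rpow_add_one (abs_ne_zero.2 hx0)]; congr 1; ring
  have e2 : ((SignType.sign x : SignType) : ℝ) * |x| = x := sign_mul_abs x
  rw [e]
  linear_combination (C * γ * |x| ^ (γ - 2)) * e2

lemma meas_S (u ε : ℝ) : MeasurableSet {x : ℝ | x ∈ Set.Ioo (-π) π ∧ ε < |x - u|} := by
  have h : MeasurableSet {x : ℝ | ε < |x - u|} :=
    measurableSet_lt measurable_const (by fun_prop)
  exact MeasurableSet.inter measurableSet_Ioo h

lemma trunc_neg (γ u ε : ℝ) :
    ∫ x in {x : ℝ | x ∈ Set.Ioo (-π) π ∧ ε < |x - (-u)|}, dk γ x / (x - (-u)) =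
    ∫ x in {x : ℝ | x ∈ Set.Ioo (-π) π ∧ ε < |x - u|}, dk γ x / (x - u) := by
  rw [← integral_indicator (meas_S _ _), ← integral_indicator (meas_S _ _), ← integral_neg_eq_self]
  congr 1
  funext x
  have hm : (-x ∈ {x : ℝ | x ∈ Set.Ioo (-π) π ∧ ε < |x - (-u)|}) ↔
      x ∈ {x : ℝ | x ∈ Set.Ioo (-π) π ∧ ε < |x - u|} := by
    simp only [Set.mem_ofPred_eq, mem_Ioo]
    rw [show -x - -u = -(x - u) by ring, abs_neg]
    constructor <;> rintro ⟨⟨h1, h2⟩, h3⟩ <;> exact ⟨⟨by linarith, by linarith⟩, h3⟩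
  by_cases hx : x ∈ {x : ℝ | x ∈ Set.Ioo (-π) π ∧ ε < |x - u|}
  · rw [indicator_of_mem hx, indicator_of_mem (hm.2 hx), dk_neg, show -x - -u = -(x - u) by ring, neg_div_neg_eq]
  · rw [indicator_of_notMem hx, indicator_of_notMem (fun h => hx (hm.1 h))]

lemma pv_lim' (γ u : ℝ) (h0 : 0 < γ) (h2 : γ < 2) (hu0 : u ≠ 0) (huπ : |u| < π) :
    Tendsto (fun ε : ℝ => ∫ x in {x : ℝ | x ∈ Set.Ioo (-π) π ∧ ε < |x - u|}, dk γ x / (x - u))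
      (nhdsWithin (0:ℝ) (Set.Ioi 0))
      (nhds (|u| ^ (γ - 1) * ((∫ s in (|u| / π)..1, 2 * wk γ s) - ∫ s in (0:ℝ)..(|u| / π), kk γ s))) := by
  rcases lt_or_gt_of_ne hu0 with h | h
  · rw [abs_of_neg h] at huπ ⊢
    have := pv_lim γ (-u) h0 h2 (by linarith) huπ
    refine this.congr (fun ε => ?_)
    have := trunc_neg γ (-u) ε
    rw [neg_neg] at this
    exact this.symm
  · rw [abs_of_pos h] at huπ ⊢
    exact pv_lim γ u h0 h2 h huπ

lemma pv_integrable (g : ℝ → ℝ) (u : ℝ) (hg : IntegrableOn g (Ioo (-π) π)) :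
    pvInt g u = ∫ x in Ioo (-π) π, g x := by
  unfold pvInt
  apply Tendsto.limUnder_eq
  rw [← integral_indicator measurableSet_Ioo]
  have e : ∀ ε : ℝ, ∫ x in {x : ℝ | x ∈ Set.Ioo (-π) π ∧ ε < |x - u|}, g x =
      ∫ x, ({x : ℝ | ε < |x - u|}).indicator ((Ioo (-π) π).indicator g) x := by
    intro ε
    rw [← integral_indicator (meas_S _ _), Set.indicator_indicator]
    have hset : {x : ℝ | x ∈ Set.Ioo (-π) π ∧ ε < |x - u|} = {x : ℝ | ε < |x - u|} ∩ Ioo (-π) π := by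
      ext x
      simp only [Set.mem_ofPred_eq, mem_inter_iff]
      tauto
    rw [hset]
  simp_rw [e]
  have hI : Integrable ((Ioo (-π) π).indicator g) := hg.integrable_indicator measurableSet_Ioo
  refine tendsto_integral_filter_of_dominated_convergence (fun x => ‖(Ioo (-π) π).indicator g x‖) ?_ ?_ hI.norm ?_
  · filter_upwards with ε
    exact hI.aestronglyMeasurable.indicator (measurableSet_lt measurable_const (by fun_prop))
  · filter_upwards with ε
    filter_upwards with x
    exact norm_indicator_le_norm_self _ _
  · have : ∀ᵐ x : ℝ, x ≠ u := by simp [ae_iff]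
    filter_upwards [this] with x hx
    have hp : 0 < |x - u| := abs_pos.2 (sub_ne_zero.2 hx)
    refine tendsto_const_nhds.congr' ?_
    filter_upwards [(eventually_lt_nhds hp).filter_mono nhdsWithin_le_nhds] with ε hε
    exact (indicator_of_mem (s := {x : ℝ | ε < |x - u|}) hε _).symm

lemma dk_integral_zero (γ : ℝ) : ∫ x in (-π)..π, dk γ x = 0 := by
  have h := intervalIntegral.integral_comp_neg (a := -π) (b := π) (dk γ)
  simp only [dk_neg, intervalIntegral.integral_neg, neg_neg] at h
  linarith

lemma far_bound (γ u : ℝ) (n : ℤ) (h0 : 0 < γ) (hu : |u| < π / 2) (hn : n ≠ 0) :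
    IntegrableOn (fun x => dk γ x / (x - u + 2 * π * (n:ℝ))) (Ioo (-π) π) ∧
    |∫ x in Ioo (-π) π, dk γ x / (x - u + 2 * π * (n:ℝ))| ≤
      (3 / (2 * π) * ∫ x in (-π)..π, |dk γ x|) * (1 / (n:ℝ) ^ 2) := by
  have hπ := pi_pos
  have hn1 : (1:ℝ) ≤ |(n:ℝ)| := by
    have : (1:ℤ) ≤ |n| := Int.one_le_abs hn
    exact_mod_cast this
  have hn0 : (n:ℝ) ≠ 0 := by exact_mod_cast hn
  have hxu : ∀ x ∈ Ioc (-π) π, |x - u| ≤ 3 * π / 2 := by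
    intro x hx
    rw [abs_lt] at hu
    rw [abs_le]
    constructor <;> linarith [hx.1, hx.2]
  have hD : ∀ x ∈ Ioc (-π) π, π / 2 * |(n:ℝ)| ≤ |x - u + 2 * π * (n:ℝ)| := by
    intro x hx
    have h1 := hxu x hx
    have h2 : |2 * π * (n:ℝ)| ≤ |x - u + 2 * π * (n:ℝ)| + |x - u| := by
      have := abs_sub (x - u + 2 * π * (n:ℝ)) (x - u)
      rwa [add_sub_cancel_left] at this
    rw [abs_mul, abs_of_pos (by positivity : 0 < 2 * π)] at h2
    nlinarith
  have hi : IntervalIntegrable (fun x => dk γ x / (x - u + 2 * π * (n:ℝ))) volume (-π) π := by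
    have := dk_div_int γ h0 (u - 2 * π * n) (π / 2) (-π) π (by linarith) le_rfl le_rfl (by linarith)
      (fun x hx => by
        have := hD x ⟨hx.1, hx.2.le⟩
        rw [show x - (u - 2 * π * n) = x - u + 2 * π * n by ring]
        nlinarith)
    refine this.congr ?_
    intro x _
    simp only
    rw [show x - (u - 2 * π * n) = x - u + 2 * π * n by ring]
  refine ⟨(intervalIntegrable_iff_integrableOn_Ioo_of_le (by linarith)).1 hi, ?_⟩
  rw [← integral_Ioc_eq_integral_Ioo, ← intervalIntegral.integral_of_le (by linarith)]
  have hd := dk_int γ h0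
  have e : ∫ x in (-π)..π, dk γ x / (x - u + 2 * π * (n:ℝ)) =
      ∫ x in (-π)..π, (dk γ x / (x - u + 2 * π * (n:ℝ)) - dk γ x * (1 / (2 * π * n))) := by
    rw [intervalIntegral.integral_sub hi (hd.mul_const _), intervalIntegral.integral_mul_const,
      dk_integral_zero]
    ring
  rw [e, ← Real.norm_eq_abs]
  refine (intervalIntegral.norm_integral_le_of_norm_le (g := fun x => |dk γ x| * (3 / (2 * π) * (1 / (n:ℝ) ^ 2)))
    (by linarith) ?_ (hd.abs.mul_const _)).trans (le_of_eq ?_)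
  · filter_upwards with x hx
    have h1 := hxu x hx
    have h2 := hD x hx
    have h3 : 0 < |x - u + 2 * π * (n:ℝ)| := by nlinarith
    have h4 : x - u + 2 * π * (n:ℝ) ≠ 0 := abs_pos.1 h3
    rw [show dk γ x / (x - u + 2 * π * (n:ℝ)) - dk γ x * (1 / (2 * π * n)) =
      dk γ x * (-(x - u) / ((x - u + 2 * π * (n:ℝ)) * (2 * π * n))) by field_simp; ring]
    rw [Real.norm_eq_abs, abs_mul, abs_div, abs_neg, abs_mul (x - u + 2 * π * (n:ℝ)),
      abs_mul (2 * π), abs_of_pos (by positivity : 0 < 2 * π)]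
    gcongr
    calc |x - u| / (|x - u + 2 * π * (n:ℝ)| * (2 * π * |(n:ℝ)|))
        ≤ (3 * π / 2) / (π / 2 * |(n:ℝ)| * (2 * π * |(n:ℝ)|)) := by gcongr
      _ = 3 / (2 * π) * (1 / (n:ℝ) ^ 2) := by
        rw [← sq_abs (n:ℝ)]
        have : |(n:ℝ)| ≠ 0 := by linarith
        field_simp
  · rw [intervalIntegral.integral_mul_const]; ring

lemma Kinf_bound (C γ : ℝ) (h0 : 0 < γ) (h2 : γ < 2) (hne : γ ≠ 1) :
    ∃ M, ∀ u : ℝ, u ≠ 0 → |u| < 1 →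
      |Kinf (perExt (fun y => C * |y| ^ γ)) u + C * γ * Real.tan (π * γ / 2) * |u| ^ (γ - 1)| ≤ M := by
  obtain ⟨M, hM⟩ := val_bound γ h0 h2 hne
  set I := (3 / (2 * π) * ∫ x in (-π)..π, |dk γ x|) with hI
  have hsum : Summable (fun n : ℤ => 1 / (n:ℝ) ^ 2) := Real.summable_one_div_int_pow.2 (by norm_num)
  set Z := ∑' n : ℤ, 1 / (n:ℝ) ^ 2 with hZ
  refine ⟨1 / π * (|C * γ| * M + |C * γ| * I * Z), fun u hu0 hu1 => ?_⟩
  have hπ := Real.pi_gt_three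
  have hne0 : ∀ᵐ x : ℝ, x ≠ 0 := by simp [ae_iff]
  set V := |u| ^ (γ - 1) * ((∫ s in (|u| / π)..1, 2 * wk γ s) - ∫ s in (0:ℝ)..(|u| / π), kk γ s) with hV
  set a : ℤ → ℝ := fun n => pvInt (fun x => deriv (perExt (fun y => C * |y| ^ γ)) x / (x - u + 2*π*(n : ℝ))) u with ha
  have hcongr : ∀ (n : ℤ) (S : Set ℝ), MeasurableSet S → S ⊆ Ioo (-π) π →
      ∫ x in S, deriv (perExt (fun y => C * |y| ^ γ)) x / (x - u + 2*π*(n : ℝ)) =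
      C * γ * ∫ x in S, dk γ x / (x - u + 2*π*(n : ℝ)) := by
    intro n S hS hSs
    rw [← integral_const_mul]
    apply setIntegral_congr_ae hS
    filter_upwards [hne0] with x hx hxS
    rw [deriv_perExt C γ x (hSs hxS) hx]
    ring
  have hsub : ∀ ε : ℝ, {x : ℝ | x ∈ Set.Ioo (-π) π ∧ ε < |x - u|} ⊆ Ioo (-π) π := fun ε x hx => hx.1
  have ha0 : a 0 = C * γ * V := by
    simp only [ha, pvInt]
    apply Tendsto.limUnder_eq
    refine ((pv_lim' γ u h0 h2 hu0 (by linarith)).const_mul (C * γ)).congr (fun ε => ?_)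
    rw [hcongr 0 _ (meas_S _ _) (hsub ε)]
    simp
  have han : ∀ n : ℤ, n ≠ 0 → |a n| ≤ |C * γ| * I * (1 / (n:ℝ) ^ 2) := by
    intro n hn
    obtain ⟨f1, f2⟩ := far_bound γ u n h0 (by linarith) hn
    have : a n = C * γ * ∫ x in Ioo (-π) π, dk γ x / (x - u + 2 * π * (n:ℝ)) := by
      rw [← hcongr n _ measurableSet_Ioo le_rfl]
      simp only [ha]
      apply pv_integrable
      refine (f1.const_mul (C * γ)).congr ?_
      filter_upwards [ae_restrict_mem measurableSet_Ioo, ae_restrict_of_ae hne0] with x hx hx0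
      rw [deriv_perExt C γ x hx hx0]
      ring
    rw [this, abs_mul, mul_assoc |C * γ| I]
    exact mul_le_mul_of_nonneg_left f2 (abs_nonneg _)
  have hb : ∀ n : ℤ, ‖(if n = 0 then 0 else a n)‖ ≤ |C * γ| * I * (1 / (n:ℝ) ^ 2) := by
    intro n
    split_ifs with h
    · subst h; simp
    · exact han n h
  have hs' : Summable (fun n : ℤ => if n = 0 then 0 else a n) :=
    Summable.of_norm_bounded (hsum.mul_left _) hb
  have hs : Summable a := by
    refine (hs'.add (hasSum_ite_eq (0:ℤ) (a 0)).summable).congr (fun n => ?_)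
    by_cases h : n = 0 <;> simp [h]
  have htail : |∑' n : ℤ, (if n = 0 then 0 else a n)| ≤ |C * γ| * I * Z :=
    tsum_of_norm_bounded (hsum.hasSum.mul_left _) hb
  have hK : Kinf (perExt (fun y => C * |y| ^ γ)) u =
      - (1 / π * (C * γ * V + ∑' n : ℤ, (if n = 0 then 0 else a n))) := by
    rw [← ha0, ← hs.tsum_eq_add_tsum_ite 0]
    rfl
  have hm := hM |u| (abs_pos.2 hu0) hu1
  rw [← hV] at hm
  rw [hK]
  have e : - (1 / π * (C * γ * V + ∑' n : ℤ, (if n = 0 then 0 else a n))) +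
      C * γ * Real.tan (π * γ / 2) * |u| ^ (γ - 1) =
      - (1 / π * ((C * γ) * (V - π * Real.tan (π * γ / 2) * |u| ^ (γ - 1)) +
        ∑' n : ℤ, (if n = 0 then 0 else a n))) := by
    field_simp
    ring
  rw [e, abs_neg, abs_mul, abs_of_pos (by positivity : 0 < 1 / π)]
  gcongr
  refine (abs_add_le _ _).trans ?_
  rw [abs_mul]
  gcongr

/-- Expansion of `(1/2) K_∞ (f²) + f · K_∞ f` for `f` the `2π`-periodic extension of
`A|u|^β`, `β ∈ (0,1)`, `β ≠ 1/2`. -/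
theorem expansion_T_singular (A β : ℝ) (hA : 0 < A) (hβ : β ∈ Set.Ioo (0:ℝ) 1)
    (hβ' : β ≠ 1/2) :
    ∃ R₁ R₂ : ℝ → ℝ,
      R₁ =O[nhdsWithin (0:ℝ) {0}ᶜ] (fun _ => (1:ℝ)) ∧
      R₂ =o[nhdsWithin (0:ℝ) {0}ᶜ] (fun u => |u| ^ (2*β - 1)) ∧
      ∀ᶠ u in nhdsWithin (0:ℝ) {0}ᶜ,
        (1/2) * Kinf (fun x => (perExt (fun y => A * |y| ^ β) x)^2) u +
            perExt (fun y => A * |y| ^ β) u * Kinf (perExt (fun y => A * |y| ^ β)) u =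
          -A^2 * β * (Real.tan (π*β) + Real.tan (π*β/2)) * |u| ^ (2*β - 1)
            + R₁ u + R₂ u := by
  obtain ⟨M₁, hM₁⟩ := Kinf_bound A β hβ.1 (by linarith [hβ.2]) (by linarith [hβ.2])
  obtain ⟨M₂, hM₂⟩ := Kinf_bound (A ^ 2) (2 * β) (by linarith [hβ.1]) (by linarith [hβ.2])
    (fun h => hβ' (by linarith))
  have hsq : (fun x => (perExt (fun y => A * |y| ^ β) x)^2) = perExt (fun y => A ^ 2 * |y| ^ (2 * β)) := by
    funext x
    simp only [perExt]
    rw [mul_pow, mul_comm 2 β, Real.rpow_mul (abs_nonneg _)]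
    norm_cast
  rw [hsq]
  refine ⟨fun u => (1/2) * Kinf (perExt (fun y => A ^ 2 * |y| ^ (2 * β))) u +
            perExt (fun y => A * |y| ^ β) u * Kinf (perExt (fun y => A * |y| ^ β)) u -
          -A^2 * β * (Real.tan (π*β) + Real.tan (π*β/2)) * |u| ^ (2*β - 1), fun _ => 0, ?_,
          isLittleO_zero _ _, ?_⟩
  · refine IsBigO.of_bound (1 / 2 * M₂ + A * M₁) ?_
    have hs : ∀ᶠ u in nhdsWithin (0:ℝ) {0}ᶜ, u ∈ Ioo (-1:ℝ) 1 :=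
      nhdsWithin_le_nhds (Ioo_mem_nhds (by norm_num) (by norm_num))
    filter_upwards [self_mem_nhdsWithin, hs] with u hu0 hu1
    have hu0 : u ≠ 0 := hu0
    have hu1 : |u| < 1 := abs_lt.2 hu1
    have hπ := Real.pi_gt_three
    rw [perExt_eq _ u (by rw [mem_Ioo, ← abs_lt]; linarith)]
    have b1 := hM₁ u hu0 hu1
    have b2 := hM₂ u hu0 hu1
    have hup := abs_pos.2 hu0
    have e0 : |u| ^ (2 * β - 1) = |u| ^ β * |u| ^ (β - 1) := by
      rw [← Real.rpow_add hup]; congr 1; ring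
    rw [show π * (2 * β) / 2 = π * β by ring] at b2
    have e : (1/2) * Kinf (perExt (fun y => A ^ 2 * |y| ^ (2 * β))) u +
            A * |u| ^ β * Kinf (perExt (fun y => A * |y| ^ β)) u -
          -A^2 * β * (Real.tan (π*β) + Real.tan (π*β/2)) * |u| ^ (2*β - 1) =
        (1/2) * (Kinf (perExt (fun y => A ^ 2 * |y| ^ (2 * β))) u +
          A ^ 2 * (2 * β) * Real.tan (π * β) * |u| ^ (2 * β - 1)) +
        A * |u| ^ β * (Kinf (perExt (fun y => A * |y| ^ β)) u +
          A * β * Real.tan (π * β / 2) * |u| ^ (β - 1)) := by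
      rw [e0]; ring
    rw [e, norm_one, mul_one, Real.norm_eq_abs]
    refine (abs_add_le _ _).trans ?_
    have hp1 : |u| ^ β ≤ 1 := Real.rpow_le_one hup.le hu1.le hβ.1.le
    have hp0 : 0 ≤ |u| ^ β := Real.rpow_nonneg hup.le _
    rw [abs_mul, abs_mul (A * |u| ^ β), abs_of_pos (by norm_num : (0:ℝ) < 1/2),
      abs_of_nonneg (by positivity : 0 ≤ A * |u| ^ β)]
    have hA1 : A * |u| ^ β ≤ A := by nlinarith
    gcongr
  · filter_upwards with u
    ring
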